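/- Let y be uniformly distributed on the unit sphere of ℝ^d and let z ≥ 0. Then |E[cos(√d·z·(y(1)+y(2)))] − e^{-z²} + e^{-z²}·z⁴/d| ≤ e^{z²}·z⁴·(z⁴ + 4z² + 2)/d², where y(1), y(2) denote the first two coordinates of y. -/

import Mathlib

open MeasureTheory ProbabilityTheory Real

/-!
Rotation invariance forces `E⟪x, y⟫ ^ n = ‖x‖ ^ n E⟪u, y⟫ ^ n` for every unit vector `u`. For
orthonormal `u, v`, comparing the coefficients of `t ^ 2` in the case `x = u + t v`, `n = 2k + 2`
gives `(2k + 1) E⟪u, y⟫ ^ (2k) ⟪v, y⟫ ^ 2 = E⟪u, y⟫ ^ (2k + 2)`; summing over an orthonormal basis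
and using `‖y‖ = 1` yields the recurrence `(d + 2k) m (k + 1) = (2k + 1) m k` for the even moments.
With `‖x‖ ^ 2 = 2 d s` the cosine series becomes
`E cos ⟪x, y⟫ = ∑ k, (-s) ^ k / k! * ∏ j < k, (1 + 2 j / d)⁻¹`, and the product equals
`1 - k (k - 1) / d` up to an error of at most `(k (k - 1) / d) ^ 2`. Summed against `s ^ k / k!`,
these errors are factorial moments of the exponential series.
-/

open Module Finset
open scoped RealInnerProductSpace Nat

section WeierstrassProduct

variable {ι R : Type*} [Field R] [LinearOrder R] [IsStrictOrderedRing R] {s : Finset ι}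
  {u : ι → R}

lemma one_add_sum_le_prod_one_add (hu : ∀ i ∈ s, 0 ≤ u i) :
    1 + ∑ i ∈ s, u i ≤ ∏ i ∈ s, (1 + u i) := by
  induction s using Finset.cons_induction with
  | empty => simp
  | cons a s ha ih =>
    simp only [forall_mem_cons] at hu
    have hsum : 0 ≤ ∑ i ∈ s, u i := sum_nonneg hu.2
    rw [sum_cons, prod_cons]
    nlinarith [mul_le_mul_of_nonneg_left (ih hu.2) (add_nonneg zero_le_one hu.1),
      mul_nonneg hu.1 hsum]

lemma one_sub_sum_le_prod_one_add_inv (hu : ∀ i ∈ s, 0 ≤ u i) :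
    1 - ∑ i ∈ s, u i ≤ ∏ i ∈ s, (1 + u i)⁻¹ := by
  induction s using Finset.cons_induction with
  | empty => simp
  | cons a s ha ih =>
    simp only [forall_mem_cons] at hu
    have hpos : 0 < 1 + u a := by linarith [hu.1]
    have hprod : ∏ i ∈ s, (1 + u i)⁻¹ ≤ 1 :=
      prod_le_one (fun i hi => inv_nonneg.2 (by linarith [hu.2 i hi]))
        fun i hi => inv_le_one_of_one_le₀ (by linarith [hu.2 i hi])
    have hdrop : ∏ i ∈ s, (1 + u i)⁻¹ - u a ≤ (1 + u a)⁻¹ * ∏ i ∈ s, (1 + u i)⁻¹ := by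
      rw [inv_mul_eq_div, le_div_iff₀ hpos]
      nlinarith [mul_nonneg hu.1 (sub_nonneg.2 hprod), mul_self_nonneg (u a)]
    rw [sum_cons, prod_cons]
    linarith [ih hu.2]

lemma abs_prod_one_add_inv_sub_le (hu : ∀ i ∈ s, 0 ≤ u i) :
    |∏ i ∈ s, (1 + u i)⁻¹ - 1 + ∑ i ∈ s, u i| ≤ (∑ i ∈ s, u i) ^ 2 := by
  have hlower := one_sub_sum_le_prod_one_add_inv hu
  have hsum : 0 ≤ ∑ i ∈ s, u i := sum_nonneg hu
  have hupper : ∏ i ∈ s, (1 + u i)⁻¹ ≤ (1 + ∑ i ∈ s, u i)⁻¹ := by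
    rw [prod_inv_distrib]
    exact inv_anti₀ (by positivity) (one_add_sum_le_prod_one_add hu)
  have hgeom : (1 + ∑ i ∈ s, u i)⁻¹ ≤ 1 - ∑ i ∈ s, u i + (∑ i ∈ s, u i) ^ 2 := by
    rw [inv_le_iff_one_le_mul₀ (by positivity)]
    nlinarith [pow_nonneg hsum 3]
  rw [abs_of_nonneg (by linarith)]
  linarith

end WeierstrassProduct

section ExponentialSeries

lemma hasSum_pow_div_factorial_mul_descFactorial (x : ℝ) (m : ℕ) :
    HasSum (fun k : ℕ => x ^ k / k ! * k.descFactorial m) (x ^ m * exp x) := by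
  have hshift (k : ℕ) :
      x ^ (k + m) / (k + m)! * (k + m).descFactorial m = x ^ m * (x ^ k / k !) := by
    have hfact : (k ! : ℝ) * (k + m).descFactorial m = (k + m)! := by
      exact_mod_cast Nat.add_sub_cancel k m ▸ Nat.factorial_mul_descFactorial (Nat.le_add_left m k)
    rw [← hfact, pow_add]
    have := (Nat.descFactorial_pos.2 (Nat.le_add_left m k)).ne'
    field_simp
  have hzero : ∑ k ∈ range m, x ^ k / k ! * (k.descFactorial m : ℝ) = 0 :=
    sum_eq_zero fun k hk => by simp [Nat.descFactorial_of_lt (mem_range.1 hk)]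
  rw [← hasSum_nat_add_iff' m, hzero, sub_zero]
  simp only [hshift, exp_eq_exp_ℝ]
  exact (NormedSpace.expSeries_div_hasSum_exp x).mul_left (x ^ m)

lemma descFactorial_two_sq (k : ℕ) :
    k.descFactorial 2 ^ 2
      = k.descFactorial 4 + 4 * k.descFactorial 3 + 2 * k.descFactorial 2 := by
  rcases k with _ | _ | _ | _ | k
  all_goals
    simp only [Nat.descFactorial]
    grind

lemma hasSum_pow_div_factorial_mul_descFactorial_two_sq (x : ℝ) :
    HasSum (fun k : ℕ => x ^ k / k ! * (k.descFactorial 2 : ℝ) ^ 2)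
      (exp x * x ^ 2 * (x ^ 2 + 4 * x + 2)) := by
  have h := ((hasSum_pow_div_factorial_mul_descFactorial x 4).add
    ((hasSum_pow_div_factorial_mul_descFactorial x 3).mul_left 4)).add
    ((hasSum_pow_div_factorial_mul_descFactorial x 2).mul_left 2)
  convert! h using 1
  · ext k
    have hsq : (k.descFactorial 2 : ℝ) ^ 2
        = k.descFactorial 4 + 4 * k.descFactorial 3 + 2 * k.descFactorial 2 := by
      exact_mod_cast descFactorial_two_sq k
    rw [hsq]
    ring
  · ring

lemma abs_sub_exp_add_le_of_hasSum {a : ℕ → ℝ} {c x S : ℝ}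
    (ha : ∀ k : ℕ, |a k - 1 + k.descFactorial 2 / c| ≤ (k.descFactorial 2 / c) ^ 2)
    (hS : HasSum (fun k : ℕ => x ^ k / k ! * a k) S) :
    |S - exp x + exp x * x ^ 2 / c|
      ≤ exp |x| * |x| ^ 2 * (|x| ^ 2 + 4 * |x| + 2) / c ^ 2 := by
  have hexp : HasSum (fun k : ℕ => x ^ k / k !) (exp x) := by
    simpa using hasSum_pow_div_factorial_mul_descFactorial x 0
  have herror := (hS.sub hexp).add ((hasSum_pow_div_factorial_mul_descFactorial x 2).div_const c)
  have hbound := (hasSum_pow_div_factorial_mul_descFactorial_two_sq |x|).div_const (c ^ 2)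
  rw [mul_comm (exp x)]
  refine herror.norm_le_of_bounded hbound fun k => ?_
  calc ‖x ^ k / k ! * a k - x ^ k / k ! + x ^ k / k ! * k.descFactorial 2 / c‖
      = ‖x ^ k / k ! * (a k - 1 + k.descFactorial 2 / c)‖ := by ring_nf
    _ = |x| ^ k / k ! * |a k - 1 + k.descFactorial 2 / c| := by
        rw [norm_eq_abs, abs_mul, abs_div, abs_pow, Nat.abs_cast]
    _ ≤ |x| ^ k / k ! * (k.descFactorial 2 / c) ^ 2 := by gcongr; exact ha k
    _ = |x| ^ k / k ! * (k.descFactorial 2 : ℝ) ^ 2 / c ^ 2 := by ring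

end ExponentialSeries

lemma eq_natCast_mul_of_forall_sum_mul_pow_eq {R : Type*} [CommRing R] [IsDomain R] [Infinite R]
    {c : ℕ → R} {M : R} {N n : ℕ} (hN : 2 < N)
    (h : ∀ t : R, ∑ m ∈ range N, c m * t ^ m = (1 + t ^ 2) ^ n * M) : c 2 = n * M := by
  have hpoly : ∑ m ∈ range N, Polynomial.C (c m) * Polynomial.X ^ m
      = Polynomial.expand R 2 ((1 + Polynomial.X) ^ n) * Polynomial.C M :=
    Polynomial.funext fun t => by simpa [Polynomial.eval_finsetSum] using h t
  have hcoeff := congrArg (Polynomial.coeff · 2) hpoly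
  rw [Polynomial.coeff_mul_C, Polynomial.coeff_expand two_pos, Polynomial.coeff_one_add_X_pow]
    at hcoeff
  simpa [Polynomial.finsetSum_coeff, Polynomial.coeff_C_mul_X_pow, hN] using hcoeff

lemma hasSum_integral_cos {Ω : Type*} [MeasurableSpace Ω] {μ : Measure Ω} {X : Ω → ℝ}
    (hX : AEMeasurable X μ) (hcosh : Integrable (fun ω => cosh (X ω)) μ) :
    HasSum (fun k : ℕ => (-1) ^ k / (2 * k)! * ∫ ω, X ω ^ (2 * k) ∂μ) (∫ ω, cos (X ω) ∂μ) := by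
  have h := hasSum_integral_of_dominated_convergence
    (F := fun (k : ℕ) ω => (-1) ^ k * X ω ^ (2 * k) / (2 * k)!)
    (fun k ω => X ω ^ (2 * k) / (2 * k)!)
    (fun k => by fun_prop)
    (fun k => .of_forall fun ω => by simp [(even_two_mul k).pow_abs])
    (.of_forall fun ω => (hasSum_cosh (X ω)).summable)
    (by simpa only [(hasSum_cosh _).tsum_eq] using hcosh)
    (.of_forall fun ω => hasSum_cos (X ω))
  simpa only [mul_div_right_comm, integral_const_mul] using h

lemma integrable_of_ae_norm_eq_one {E F : Type*} [NormedAddCommGroup E] [ProperSpace E]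
    [MeasurableSpace E] [BorelSpace E] [NormedAddCommGroup F]
    {μ : Measure E} [IsFiniteMeasure μ] {f : E → F} (hf : Continuous f)
    (hsph : ∀ᵐ y ∂μ, ‖y‖ = 1) : Integrable f μ := by
  have h := hf.continuousOn.integrableOn_compact (μ := μ) (isCompact_sphere (0 : E) 1)
  rwa [IntegrableOn, Measure.restrict_eq_self_of_ae_mem (by simpa using hsph)] at h

lemma finrank_pos_of_ae_norm_eq_one {E : Type*} [NormedAddCommGroup E] [NormedSpace ℝ E]
    [FiniteDimensional ℝ E] [MeasurableSpace E] {μ : Measure E} [NeZero μ]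
    (hsph : ∀ᵐ y ∂μ, ‖y‖ = 1) : 0 < finrank ℝ E := by
  obtain ⟨y, hy⟩ := hsph.exists
  exact finrank_pos_iff_exists_ne_zero.2 ⟨y, norm_ne_zero_iff.1 (by simp [hy])⟩

/-- Invariance of a measure under all linear isometries, reflections included. Together with
`‖y‖ = 1` almost everywhere it characterises the uniform distribution on the unit sphere among
probability measures on a finite-dimensional inner product space. -/
def IsRotationInvariant {E : Type*} [SeminormedAddCommGroup E] [NormedSpace ℝ E] [MeasurableSpace E]
    (μ : Measure E) : Prop :=
  ∀ T : E ≃ₗᵢ[ℝ] E, μ.map T = μ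

lemma integral_inner_add_smul_pow {E : Type*} [NormedAddCommGroup E] [InnerProductSpace ℝ E]
    [FiniteDimensional ℝ E] [MeasurableSpace E] [BorelSpace E] {μ : Measure E} [IsFiniteMeasure μ]
    (hsph : ∀ᵐ y ∂μ, ‖y‖ = 1) (u v : E) (t : ℝ) (n : ℕ) :
    ∫ y, ⟪u + t • v, y⟫ ^ n ∂μ
      = ∑ m ∈ range (n + 1), (n.choose m * ∫ y, ⟪u, y⟫ ^ (n - m) * ⟪v, y⟫ ^ m ∂μ) * t ^ m := by
  have hbinom (y : E) : ⟪u + t • v, y⟫ ^ n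
      = ∑ m ∈ range (n + 1), n.choose m * t ^ m * (⟪u, y⟫ ^ (n - m) * ⟪v, y⟫ ^ m) := by
    rw [inner_add_left, real_inner_smul_left, add_comm, add_pow]
    exact sum_congr rfl fun m _ => by ring
  simp only [hbinom]
  rw [integral_finsetSum _ fun m _ => integrable_of_ae_norm_eq_one (by fun_prop) hsph]
  exact sum_congr rfl fun m _ => by rw [integral_const_mul]; ring

section RotationInvariant

variable {E : Type*} [NormedAddCommGroup E] [InnerProductSpace ℝ E] [MeasurableSpace E]
  [BorelSpace E] {μ : Measure E}

namespace IsRotationInvariant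

lemma integral_comp_inner_eq_of_norm_eq {F : Type*} [NormedAddCommGroup F] [NormedSpace ℝ F]
    (hrot : IsRotationInvariant μ) {u v : E} (huv : ‖u‖ = ‖v‖) (f : ℝ → F) :
    ∫ y, f ⟪u, y⟫ ∂μ = ∫ y, f ⟪v, y⟫ ∂μ := by
  let T := (ℝ ∙ (u - v))ᗮ.reflection
  have hT : T u = v := Submodule.reflection_sub huv
  calc ∫ y, f ⟪u, y⟫ ∂μ = ∫ y, f ⟪v, T y⟫ ∂μ := by simp only [← hT, T.inner_map_map]
    _ = ∫ y, f ⟪v, y⟫ ∂(μ.map T) := by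
      exact (T.toHomeomorph.measurableEmbedding.integral_map fun y => f ⟪v, y⟫).symm
    _ = ∫ y, f ⟪v, y⟫ ∂μ := by rw [hrot T]

lemma integral_inner_pow_eq_norm_pow_mul (hrot : IsRotationInvariant μ) {u : E} (hu : ‖u‖ = 1)
    (x : E) (n : ℕ) : ∫ y, ⟪x, y⟫ ^ n ∂μ = ‖x‖ ^ n * ∫ y, ⟪u, y⟫ ^ n ∂μ := by
  rw [hrot.integral_comp_inner_eq_of_norm_eq (v := ‖x‖ • u) (by simp [norm_smul, hu]) (· ^ n)]
  simp only [real_inner_smul_left, mul_pow, integral_const_mul]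

variable [FiniteDimensional ℝ E] [IsFiniteMeasure μ]

lemma integral_inner_pow_mul_inner_sq (hrot : IsRotationInvariant μ) (hsph : ∀ᵐ y ∂μ, ‖y‖ = 1)
    {u v : E} (hu : ‖u‖ = 1) (hv : ‖v‖ = 1) (huv : ⟪u, v⟫ = 0) (k : ℕ) :
    (2 * k + 1) * ∫ y, ⟪u, y⟫ ^ (2 * k) * ⟪v, y⟫ ^ 2 ∂μ = ∫ y, ⟪u, y⟫ ^ (2 * (k + 1)) ∂μ := by
  have hnorm (t : ℝ) : ‖u + t • v‖ ^ 2 = 1 + t ^ 2 := by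
    simp [norm_add_sq_real, real_inner_smul_right, norm_smul, hu, hv, huv]
  have hcoeff := eq_natCast_mul_of_forall_sum_mul_pow_eq (N := 2 * (k + 1) + 1)
    (n := k + 1) (M := ∫ y, ⟪u, y⟫ ^ (2 * (k + 1)) ∂μ) (by omega) fun t => by
      rw [← integral_inner_add_smul_pow hsph u v t (2 * (k + 1)),
        hrot.integral_inner_pow_eq_norm_pow_mul hu, pow_mul, hnorm]
  rw [Nat.cast_choose_two, show 2 * (k + 1) - 2 = 2 * k by omega] at hcoeff
  have hk : ((k + 1 : ℕ) : ℝ) ≠ 0 := by positivity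
  refine mul_left_cancel₀ hk (Eq.trans ?_ hcoeff)
  push_cast
  ring

lemma finrank_add_mul_integral_inner_pow (hrot : IsRotationInvariant μ)
    (hsph : ∀ᵐ y ∂μ, ‖y‖ = 1) {ι : Type*} [Fintype ι] (b : OrthonormalBasis ι ℝ E) (i : ι)
    (k : ℕ) :
    (finrank ℝ E + 2 * k) * ∫ y, ⟪b i, y⟫ ^ (2 * (k + 1)) ∂μ
      = (2 * k + 1) * ∫ y, ⟪b i, y⟫ ^ (2 * k) ∂μ := by
  classical
  have hmixed (j : ι) (hj : j ∈ univ.erase i) :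
      (2 * k + 1) * ∫ y, ⟪b i, y⟫ ^ (2 * k) * ⟪b j, y⟫ ^ 2 ∂μ
        = ∫ y, ⟪b i, y⟫ ^ (2 * (k + 1)) ∂μ :=
    hrot.integral_inner_pow_mul_inner_sq hsph (b.norm_eq_one i) (b.norm_eq_one j)
      (b.inner_eq_zero (ne_of_mem_erase hj).symm) k
  have hsplit : ∫ y, ⟪b i, y⟫ ^ (2 * k) ∂μ
      = ∑ j, ∫ y, ⟪b i, y⟫ ^ (2 * k) * ⟪b j, y⟫ ^ 2 ∂μ := by
    rw [← integral_finsetSum _ fun j _ => integrable_of_ae_norm_eq_one (by fun_prop) hsph]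
    refine integral_congr_ae ?_
    filter_upwards [hsph] with y hy
    rw [← mul_sum, b.sum_sq_inner_right, hy, one_pow, mul_one]
  have hdiag (y : E) : ⟪b i, y⟫ ^ (2 * k) * ⟪b i, y⟫ ^ 2 = ⟪b i, y⟫ ^ (2 * (k + 1)) := by ring
  have hcard : ((univ.erase i).card : ℝ) = finrank ℝ E - 1 := by
    rw [cast_card_erase_of_mem (mem_univ i), card_univ, ← finrank_eq_card_basis b.toBasis]
  rw [hsplit, ← add_sum_erase _ _ (mem_univ i), mul_add (2 * (k : ℝ) + 1), mul_sum,
    sum_congr rfl hmixed, sum_const, nsmul_eq_mul, hcard]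
  simp only [hdiag]
  ring

end IsRotationInvariant

/-- The factor `∏ j < k, d / (d + 2 j)` by which the `2 k`-th moment of a coordinate of `√d • y`,
with `y` uniform on the unit sphere of a `d`-dimensional space, falls short of the standard
Gaussian moment `(2 k - 1)‼ = (2 k)! / (2 ^ k * k !)`. -/
noncomputable def sphereGaussianMomentRatio (d k : ℕ) : ℝ :=
  ∏ j ∈ range k, (1 + 2 * j / d : ℝ)⁻¹

lemma abs_sphereGaussianMomentRatio_sub_le (d k : ℕ) :
    |sphereGaussianMomentRatio d k - 1 + k.descFactorial 2 / d|
      ≤ (k.descFactorial 2 / d : ℝ) ^ 2 := by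
  have hsum : ∑ j ∈ range k, (2 * j / d : ℝ) = k.descFactorial 2 / d := by
    have hgauss : (∑ j ∈ range k, j) * 2 = k.descFactorial 2 := by
      rw [sum_range_id_mul_two, Nat.descFactorial, Nat.descFactorial_one, mul_comm]
    rw [← sum_div, ← mul_sum, ← hgauss, Nat.cast_mul, Nat.cast_sum, Nat.cast_ofNat,
      mul_comm]
  rw [← hsum]
  exact abs_prod_one_add_inv_sub_le fun j _ => by positivity

variable [FiniteDimensional ℝ E] [IsProbabilityMeasure μ]

lemma IsRotationInvariant.integral_inner_pow (hrot : IsRotationInvariant μ)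
    (hsph : ∀ᵐ y ∂μ, ‖y‖ = 1) {x : E} {s : ℝ} (hx : ‖x‖ ^ 2 = 2 * finrank ℝ E * s) (k : ℕ) :
    ∫ y, ⟪x, y⟫ ^ (2 * k) ∂μ
      = (2 * k)! * (s ^ k / k ! * sphereGaussianMomentRatio (finrank ℝ E) k) := by
  have hd := finrank_pos_of_ae_norm_eq_one hsph
  let b := stdOrthonormalBasis ℝ E
  let i : Fin (finrank ℝ E) := ⟨0, hd⟩
  rw [hrot.integral_inner_pow_eq_norm_pow_mul (b.norm_eq_one i), pow_mul, hx]
  induction k with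
  | zero => simp [sphereGaussianMomentRatio]
  | succ k ih =>
    have hrec : ∫ y, ⟪b i, y⟫ ^ (2 * (k + 1)) ∂μ
        = (2 * k + 1) / (finrank ℝ E + 2 * k) * ∫ y, ⟪b i, y⟫ ^ (2 * k) ∂μ := by
      rw [div_mul_eq_mul_div, eq_div_iff (by positivity), mul_comm]
      exact hrot.finrank_add_mul_integral_inner_pow hsph b i k
    have hratio : sphereGaussianMomentRatio (finrank ℝ E) (k + 1)
        = sphereGaussianMomentRatio (finrank ℝ E) k * (1 + 2 * k / finrank ℝ E : ℝ)⁻¹ :=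
      prod_range_succ _ _
    calc (2 * finrank ℝ E * s) ^ (k + 1) * ∫ y, ⟪b i, y⟫ ^ (2 * (k + 1)) ∂μ
        = 2 * finrank ℝ E * s * ((2 * k + 1) / (finrank ℝ E + 2 * k)) *
            ((2 * finrank ℝ E * s) ^ k * ∫ y, ⟪b i, y⟫ ^ (2 * k) ∂μ) := by rw [hrec]; ring
      _ = (2 * (k + 1))! *
            (s ^ (k + 1) / (k + 1)! * sphereGaussianMomentRatio (finrank ℝ E) (k + 1)) := by
        rw [ih, hratio, mul_add_one 2 k]
        simp only [Nat.factorial_succ]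
        push_cast
        field_simp
        ring

lemma IsRotationInvariant.hasSum_integral_cos_inner (hrot : IsRotationInvariant μ)
    (hsph : ∀ᵐ y ∂μ, ‖y‖ = 1) {x : E} {s : ℝ} (hx : ‖x‖ ^ 2 = 2 * finrank ℝ E * s) :
    HasSum (fun k : ℕ => (-s) ^ k / k ! * sphereGaussianMomentRatio (finrank ℝ E) k)
      (∫ y, cos ⟪x, y⟫ ∂μ) := by
  convert! hasSum_integral_cos (μ := μ) (X := fun y => ⟪x, y⟫) (by fun_prop)
    (integrable_of_ae_norm_eq_one (by fun_prop) hsph) using 2 with k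
  rw [hrot.integral_inner_pow hsph hx, neg_pow]
  field_simp

theorem stmt_8_general (hrot : IsRotationInvariant μ) (hsph : ∀ᵐ y ∂μ, ‖y‖ = 1) {x : E} {s : ℝ}
    (hx : ‖x‖ ^ 2 = 2 * finrank ℝ E * s) :
    |(∫ y, cos ⟪x, y⟫ ∂μ) - exp (-s) + exp (-s) * s ^ 2 / finrank ℝ E|
      ≤ exp s * s ^ 2 * (s ^ 2 + 4 * s + 2) / finrank ℝ E ^ 2 := by
  have hd : (0 : ℝ) < finrank ℝ E := mod_cast finrank_pos_of_ae_norm_eq_one hsph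
  have hs : 0 ≤ s := by
    by_contra! hneg
    nlinarith [sq_nonneg ‖x‖]
  have h := abs_sub_exp_add_le_of_hasSum (abs_sphereGaussianMomentRatio_sub_le (finrank ℝ E))
    (hrot.hasSum_integral_cos_inner hsph hx)
  rwa [neg_sq, abs_neg, abs_of_nonneg hs] at h

end RotationInvariant

lemma norm_sq_smul_single_add_single {ι : Type*} [Fintype ι] [DecidableEq ι] {i j : ι}
    (hij : i ≠ j) (c : ℝ) :
    ‖c • (EuclideanSpace.single i (1 : ℝ) + EuclideanSpace.single j 1)‖ ^ 2 = 2 * c ^ 2 := by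
  have horth : ⟪EuclideanSpace.single i (1 : ℝ), EuclideanSpace.single j 1⟫ = 0 := by
    simp [EuclideanSpace.inner_single_left, hij]
  simp only [norm_smul, mul_pow, norm_add_sq_real, horth, PiLp.norm_single, norm_one,
    norm_eq_abs, sq_abs]
  ring

/-- if `y` is uniformly distributed on the unit sphere of `ℝ^d` (a probability
measure supported on the sphere and invariant under all rotations) and `z ≥ 0`, then
`|E[cos(√d·z·(y(1)+y(2)))] − e^{-z²} + e^{-z²}·z⁴/d| ≤ e^{z²}·z⁴·(z⁴+4z²+2)/d²`,
where `y(1), y(2)` are the first two coordinates of `y`. -/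
theorem stmt_8 (d : ℕ) (hd : 2 ≤ d) (μ : Measure (EuclideanSpace ℝ (Fin d)))
    (hprob : IsProbabilityMeasure μ) (hsph : ∀ᵐ u ∂μ, ‖u‖ = 1)
    (hrot : ∀ T : EuclideanSpace ℝ (Fin d) ≃ₗᵢ[ℝ] EuclideanSpace ℝ (Fin d), μ.map T = μ)
    (z : ℝ) (hz : 0 ≤ z) :
    |(∫ y, Real.cos (Real.sqrt d * z * (y (⟨0, by omega⟩ : Fin d) + y (⟨1, by omega⟩ : Fin d))) ∂μ)
        - Real.exp (-z ^ 2) + Real.exp (-z ^ 2) * z ^ 4 / d|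
      ≤ Real.exp (z ^ 2) * z ^ 4 * (z ^ 4 + 4 * z ^ 2 + 2) / d ^ 2 := by
  have hx := norm_sq_smul_single_add_single (i := (⟨0, by omega⟩ : Fin d)) (j := ⟨1, by omega⟩)
    (by simp) (√d * z)
  have h := stmt_8_general (s := z ^ 2) hrot hsph (by
    rw [hx, finrank_euclideanSpace_fin, mul_pow, sq_sqrt d.cast_nonneg, mul_assoc])
  simp only [real_inner_smul_left, inner_add_left, EuclideanSpace.inner_single_left,
    finrank_euclideanSpace_fin, map_one, one_mul, ← pow_mul] at h
  exact h
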